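/- For every integer n ≥ 1, ν₂(S(4n+1, 5)) = 0 and ν₂(S(4n+2, 5)) = 0; that is, both S(4n+1,5) and S(4n+2,5) are odd. -/

import Mathlib

/-- Stirling numbers of the second kind, via the recurrence
`S(n+1,k+1) = S(n,k) + (k+1)·S(n,k+1)`. -/
def stirling2 : ℕ → ℕ → ℕ
  | 0, 0 => 1
  | 0, _ + 1 => 0
  | _ + 1, 0 => 0
  | n + 1, k + 1 => stirling2 n k + (k + 1) * stirling2 n (k + 1)

/-!
The generating function `∑ₙ S(n + k, k) xⁿ = ∏_{1 ≤ j ≤ k} (1 - j x)⁻¹` reduces modulo `2` to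
`(1 - x)^(-⌈k / 2⌉)`, since only the factors with odd `j` survive. Hence
`S(n + k, k) ≡ multichoose ⌈k / 2⌉ n`; on coefficients, the recurrence of `S` modulo `2` is Pascal's
rule when `k` is odd and `S(n + k, k) ≡ S(n + k - 1, k - 1)` when `k` is even. For `k = 5` the
right-hand side is `(n + 2).choose 2`, which by Lucas' theorem has the parity of `⌊(n + 2) / 2⌋`.
-/

theorem stirling2_eq_stirlingSecond (n k : ℕ) : stirling2 n k = Nat.stirlingSecond n k := by
  induction n generalizing k with
  | zero => cases k <;> rfl
  | succ n ih =>
    cases k with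
    | zero => rfl
    | succ k => rw [stirling2, Nat.stirlingSecond_succ_succ, ih, ih, add_comm]

theorem stirlingSecond_add_self_modEq_multichoose (n k : ℕ) :
    Nat.stirlingSecond (n + k) k ≡ Nat.multichoose ((k + 1) / 2) n [MOD 2] := by
  induction k generalizing n with
  | zero => cases n <;> simp [Nat.ModEq]
  | succ k ihk =>
    induction n with
    | zero => rw [zero_add, Nat.stirlingSecond_self, Nat.multichoose_zero_right]
    | succ n ihn =>
      have recurrence : Nat.stirlingSecond (n + 1 + (k + 1)) (k + 1) =
          (k + 1) * Nat.stirlingSecond (n + (k + 1)) (k + 1) +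
            Nat.stirlingSecond (n + 1 + k) k := by
        rw [← add_assoc, Nat.stirlingSecond_succ_succ, add_right_comm n 1 k, add_assoc n k 1]
      rw [recurrence]
      rcases Nat.even_or_odd' k with ⟨j, rfl | rfl⟩
      · have pascal : Nat.multichoose ((2 * j + 1 + 1) / 2) (n + 1) =
            1 * Nat.multichoose ((2 * j + 1 + 1) / 2) n +
              Nat.multichoose ((2 * j + 1) / 2) (n + 1) := by
          rw [show (2 * j + 1 + 1) / 2 = j + 1 by omega, show (2 * j + 1) / 2 = j by omega,
            Nat.multichoose_succ_succ, one_mul, add_comm]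
        have coeff_odd : 2 * j + 1 ≡ 1 [MOD 2] := by simp [Nat.ModEq]
        rw [pascal]
        exact (coeff_odd.mul ihn).add (ihk (n + 1))
      · have coeff_even : 2 * j + 1 + 1 ≡ 0 [MOD 2] := by simp [Nat.ModEq, add_assoc]
        have ceil_eq : (2 * j + 1 + 1 + 1) / 2 = (2 * j + 1 + 1) / 2 := by omega
        rw [ceil_eq]
        simpa only [zero_mul, zero_add] using (coeff_even.mul_right _).add (ihk (n + 1))

theorem choose_prime_modEq_div (n p : ℕ) [Fact p.Prime] : n.choose p ≡ n / p [MOD p] := by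
  have hp : 0 < p := (Fact.out : p.Prime).pos
  simpa only [Nat.mod_self, Nat.div_self hp, Nat.choose_zero_right, Nat.choose_one_right, one_mul]
    using Choose.choose_modEq_choose_mod_mul_choose_div_nat (n := n) (k := p) (p := p)

theorem multichoose_three (n : ℕ) : Nat.multichoose 3 n = (n + 2).choose 2 := by
  rw [Nat.multichoose_eq, show 3 + n - 1 = n + 2 by omega, Nat.choose_symm_add]

theorem odd_stirlingSecond_add_five_iff (n : ℕ) :
    Odd (Nat.stirlingSecond (n + 5) 5) ↔ Even (n / 2) := by
  have parity : Nat.stirlingSecond (n + 5) 5 ≡ n / 2 + 1 [MOD 2] :=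
    calc
      Nat.stirlingSecond (n + 5) 5 ≡ Nat.multichoose 3 n [MOD 2] :=
        stirlingSecond_add_self_modEq_multichoose n 5
      _ = (n + 2).choose 2 := multichoose_three n
      _ ≡ (n + 2) / 2 [MOD 2] := choose_prime_modEq_div (n + 2) 2
      _ = n / 2 + 1 := Nat.add_div_right n two_pos
  rw [Nat.odd_iff, parity, ← Nat.odd_iff, Nat.odd_add_one, Nat.not_odd_iff_even]

/-- For n ≥ 1, ν₂(S(4n+1,5)) = 0 and ν₂(S(4n+2,5)) = 0. -/
theorem nu2_stirling_five_4n (n : ℕ) (hn : 1 ≤ n) :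
    padicValNat 2 (stirling2 (4 * n + 1) 5) = 0 ∧
    padicValNat 2 (stirling2 (4 * n + 2) 5) = 0 := by
  obtain ⟨m, rfl⟩ := Nat.exists_eq_add_of_le' hn
  have odd₁ : Odd (Nat.stirlingSecond (4 * m + 5) 5) :=
    (odd_stirlingSecond_add_five_iff (4 * m)).2 ⟨m, by omega⟩
  have odd₂ : Odd (Nat.stirlingSecond (4 * m + 1 + 5) 5) :=
    (odd_stirlingSecond_add_five_iff (4 * m + 1)).2 ⟨m, by omega⟩
  simp only [stirling2_eq_stirlingSecond]
  exact ⟨padicValNat.eq_zero_of_not_dvd odd₁.not_two_dvd_nat,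
    padicValNat.eq_zero_of_not_dvd odd₂.not_two_dvd_nat⟩
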